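/- arXiv:2006.06060 — 2 statements merged into one kernel-verified Lean document; each statement's English description precedes it below -/
import Mathlib

section
/- Let T be a set and 𝒜 a collection of subsets of T with ∅ ∈ 𝒜 such that 𝒜 \ {∅} satisfies the SHAPE condition. Let h : Set T → ℝ be a function with h(∅) = 0. Then there exists a unique ℝ-linear map H from the ℝ-linear span E of {1_A : A ∈ 𝒜} (a subspace of the functions T → ℝ) to ℝ such that H(1_A) = h(A) for every A ∈ 𝒜. -/
/-!
The indicators of the nonempty members of `𝒜` are linearly independent
(`linearIndependent_indicator`): among the sets with nonzero coefficient in a vanishing linear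
combination choose one, `A`, maximal for inclusion. By the SHAPE condition `A` is not covered by
the others, as it would be contained in one of them. At a point of `A` outside all the others the
combination takes the value of the coefficient of `A`, which is therefore zero.

Hence the values `h A`, for `A ∈ 𝒜` nonempty, can be prescribed freely on a linear map; the value
at `1_∅ = 0` is forced to be `0 = h ∅`. Uniqueness holds because the indicators span `E`.
-/

theorem linearIndependent_indicator {T : Type*} (𝒮 : Set (Set T))
    (hne : ∀ A ∈ 𝒮, A.Nonempty)
    (hshape : ∀ (n : ℕ) (A : Set T) (As : Fin (n + 1) → Set T),
      A ∈ 𝒮 → (∀ i, As i ∈ 𝒮) → A ⊆ ⋃ i, As i → ∃ j, A ⊆ As j) :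
    LinearIndependent ℝ (fun A : 𝒮 => Set.indicator (A : Set T) (fun _ => (1 : ℝ))) := by
  classical
  rw [linearIndependent_iff']
  intro s g hg
  by_contra! hcon
  obtain ⟨i₀, hi₀, hgi₀⟩ := hcon
  let S := s.filter (fun i => g i ≠ 0)
  obtain ⟨A, hA⟩ := S.exists_maximal ⟨i₀, by simp [S, hi₀, hgi₀]⟩
  have hAs : A ∈ s ∧ g A ≠ 0 := by simpa [S] using hA.prop
  have key : ∃ t ∈ (A : Set T), ∀ B ∈ S.erase A, t ∉ (B : Set T) := by
    by_contra! hcov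
    -- The family fed to the SHAPE condition must be nonempty: the point of `A` yields a member.
    obtain ⟨t₀, ht₀⟩ := hne A A.2
    obtain ⟨B₀, hB₀, -⟩ := hcov t₀ ht₀
    obtain ⟨n, hn⟩ : ∃ n, (S.erase A).card = n + 1 :=
      Nat.exists_eq_succ_of_ne_zero (Finset.card_ne_zero_of_mem hB₀)
    let e := (S.erase A).equivFinOfCardEq hn
    obtain ⟨j, hj⟩ := hshape n A (fun i => ((e.symm i : 𝒮) : Set T)) A.2
      (fun i => (e.symm i : 𝒮).2) (by
        intro t ht
        obtain ⟨B, hB, htB⟩ := hcov t ht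
        exact Set.mem_iUnion.2 ⟨e ⟨B, hB⟩, by simpa using htB⟩)
    have hmem := Finset.mem_erase.1 (e.symm j).2
    exact hmem.1 (le_antisymm (hA.le_of_ge hmem.2 hj) hj)
  obtain ⟨t, htA, ht⟩ := key
  have h0 := congrFun hg t
  rw [Finset.sum_apply, Finset.sum_eq_single A] at h0
  · exact hAs.2 (by simpa [htA] using h0)
  · intro B hB hBA
    by_cases hgB : g B = 0
    · simp [hgB]
    · have : t ∉ (B : Set T) := ht B (by simp [S, hB, hgB, hBA])
      simp [this]
  · exact fun hn => absurd hAs.1 hn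

/-- **Existence and uniqueness of the linear functional associated with `h`.**
Let `T` be a set and `𝒜` a collection of subsets of `T` with `∅ ∈ 𝒜` such that
`𝒜 \ {∅}` satisfies the SHAPE condition. Let `h : Set T → ℝ` with `h ∅ = 0`. Then there
is a unique `ℝ`-linear map `H` from the span `E` of `{1_A : A ∈ 𝒜}` to `ℝ` with
`H (1_A) = h A` for every `A ∈ 𝒜`. -/
theorem stmt_1 {T : Type*} (𝒜 : Set (Set T)) (h : Set T → ℝ)
    (hempty : (∅ : Set T) ∈ 𝒜)
    (hshape : ∀ (n : ℕ) (A : Set T) (As : Fin (n + 1) → Set T),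
      A ∈ 𝒜 \ {∅} → (∀ i, As i ∈ 𝒜 \ {∅}) → A ⊆ ⋃ i, As i → ∃ j, A ⊆ As j)
    (hh : h ∅ = 0) :
    ∃! H : (Submodule.span ℝ
        ((fun A : Set T => Set.indicator A (fun _ => (1 : ℝ))) '' 𝒜)) →ₗ[ℝ] ℝ,
      ∀ (A : Set T) (hA : A ∈ 𝒜),
        H ⟨Set.indicator A (fun _ => (1 : ℝ)),
           Submodule.subset_span (Set.mem_image_of_mem _ hA)⟩ = h A := by
  have hli := linearIndependent_indicator (𝒜 \ {∅})
    (fun A hA => Set.nonempty_iff_ne_empty.2 hA.2) hshape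
  -- Prescribe `h` on the independent family and extend linearly to all functions `T → ℝ`.
  obtain ⟨L, hL⟩ := LinearMap.exists_extend
    ((Finsupp.linearCombination ℝ (fun A : ↥(𝒜 \ {∅}) => h A)).comp hli.repr)
  have hLA : ∀ A ∈ 𝒜, L (Set.indicator A (fun _ => (1 : ℝ))) = h A := by
    intro A hA
    by_cases hA0 : A = ∅
    · subst hA0
      rw [Set.indicator_empty, hh]
      exact map_zero L
    · have hmem : A ∈ 𝒜 \ {∅} := ⟨hA, hA0⟩
      have h1 := LinearMap.congr_fun hL
        ⟨_, Submodule.subset_span (Set.mem_range_self (⟨A, hmem⟩ : ↥(𝒜 \ {∅})))⟩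
      simp only [LinearMap.comp_apply, Submodule.subtype_apply] at h1
      rw [hli.repr_eq_single ⟨A, hmem⟩ _ rfl] at h1
      simpa using h1
  refine ⟨L.domRestrict _, fun A hA => hLA A hA, fun H hH => ?_⟩
  refine LinearMap.ext_on Submodule.span_span_coe_preimage ?_
  rintro ⟨_, _⟩ ⟨A, hA, rfl⟩
  exact (hH A hA).trans (hLA A hA).symm
end

section
/- Let T be a set and 𝒜 a collection of subsets of T containing ∅ and closed under binary intersections, and suppose there is a sequence (T_k)_{k∈ℕ} of elements of 𝒜 with T = ⋃_k T_k. Let μ be a measure on the σ-algebra generated by 𝒜 such that μ(A) < ∞ for every A ∈ 𝒜. Then for every set B measurable with respect to the σ-algebra generated by 𝒜 with μ(B) < ∞ and every ε > 0, there exists U ∈ 𝒞(u) such that μ(B △ U) < ε. -/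
/-!
The class `𝒞(u)` is a ring of sets generating `σ(𝒜)`: stability under differences comes from
`(A \ ⋃ F) \ (A' \ ⋃ F') = (A \ (⋃ F ∪ A')) ∪ ⋃ f ∈ F', (A ∩ f) \ ⋃ F`, together with the
stability of `𝒜` under intersections. Approximation by a generating ring is in Mathlib for finite
measures (`exists_measure_symmDiff_lt_of_generateFrom_isSetRing`). The general case reduces to it
by localization: with `S n = T₀ ∪ ⋯ ∪ T_n`, continuity from above makes `μ (B \ S n)` small for
some `n`, the finite measure `μ.restrict (S n)` provides an approximation `U` of `B` inside `S n`,
and `U ∩ S n`, which is again in the ring, approximates `B` for `μ`.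
-/

open MeasureTheory
open scoped ENNReal

/-- The class `𝒞` of increment sets: sets of the form `A₀ \ (A₁ ∪ ⋯ ∪ A_n)`
with `n ∈ ℕ` and `A₀, …, A_n ∈ 𝒜`. -/
def classC {T : Type*} (𝒜 : Set (Set T)) : Set (Set T) :=
  {C | ∃ (A₀ : Set T) (n : ℕ) (As : Fin n → Set T),
    A₀ ∈ 𝒜 ∧ (∀ i, As i ∈ 𝒜) ∧ C = A₀ \ ⋃ i, As i}

/-- The class `𝒞(u)` of finite unions of elements of `𝒞`. -/
def classCu {T : Type*} (𝒜 : Set (Set T)) : Set (Set T) :=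
  {U | ∃ (n : ℕ) (Cs : Fin n → Set T), (∀ i, Cs i ∈ classC 𝒜) ∧ U = ⋃ i, Cs i}

lemma mem_classC_iff {T : Type*} {𝒜 : Set (Set T)} {C : Set T} :
    C ∈ classC 𝒜 ↔ ∃ A ∈ 𝒜, ∃ F : Set (Set T), F.Finite ∧ F ⊆ 𝒜 ∧ C = A \ ⋃₀ F := by
  constructor
  · rintro ⟨A, n, As, hA, hAs, rfl⟩
    refine ⟨A, hA, Set.range As, Set.finite_range _, ?_, by rw [Set.sUnion_range]⟩
    rintro _ ⟨i, rfl⟩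
    exact hAs i
  · rintro ⟨A, hA, F, hF, hFA, rfl⟩
    obtain ⟨n, f, rfl⟩ := hF.fin_embedding
    exact ⟨A, n, f, hA, fun i => hFA ⟨i, rfl⟩, by rw [Set.sUnion_range]⟩

lemma mem_classCu_iff {T : Type*} {𝒜 : Set (Set T)} {U : Set T} :
    U ∈ classCu 𝒜 ↔ ∃ F : Set (Set T), F.Finite ∧ F ⊆ classC 𝒜 ∧ U = ⋃₀ F := by
  constructor
  · rintro ⟨n, Cs, hCs, rfl⟩
    refine ⟨Set.range Cs, Set.finite_range _, ?_, by rw [Set.sUnion_range]⟩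
    rintro _ ⟨i, rfl⟩
    exact hCs i
  · rintro ⟨F, hF, hFC, rfl⟩
    obtain ⟨n, f, rfl⟩ := hF.fin_embedding
    exact ⟨n, f, fun i => hFC ⟨i, rfl⟩, by rw [Set.sUnion_range]⟩

lemma classC_subset_classCu {T : Type*} (𝒜 : Set (Set T)) : classC 𝒜 ⊆ classCu 𝒜 :=
  fun C hC => mem_classCu_iff.2 ⟨{C}, Set.finite_singleton C, by simpa using hC, by simp⟩

lemma subset_classC {T : Type*} (𝒜 : Set (Set T)) : 𝒜 ⊆ classC 𝒜 :=
  fun A hA => mem_classC_iff.2 ⟨A, hA, ∅, Set.finite_empty, by simp, by simp⟩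

lemma empty_mem_classCu {T : Type*} (𝒜 : Set (Set T)) : (∅ : Set T) ∈ classCu 𝒜 :=
  mem_classCu_iff.2 ⟨∅, Set.finite_empty, by simp, by simp⟩

lemma union_mem_classCu {T : Type*} {𝒜 : Set (Set T)} {U V : Set T}
    (hU : U ∈ classCu 𝒜) (hV : V ∈ classCu 𝒜) : U ∪ V ∈ classCu 𝒜 := by
  obtain ⟨F, hF, hFC, rfl⟩ := mem_classCu_iff.1 hU
  obtain ⟨G, hG, hGC, rfl⟩ := mem_classCu_iff.1 hV
  exact mem_classCu_iff.2 ⟨F ∪ G, hF.union hG, Set.union_subset hFC hGC, by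
    rw [Set.sUnion_union]⟩

/-- Induction principle for `𝒞(u)`: adjoin one element of `𝒞` at a time. -/
lemma classCu_induction {T : Type*} {𝒜 : Set (Set T)} {p : Set T → Prop} (h0 : p ∅)
    (h1 : ∀ C ∈ classC 𝒜, ∀ U, p U → p (C ∪ U)) {U : Set T} (hU : U ∈ classCu 𝒜) : p U := by
  obtain ⟨F, hF, hFC, rfl⟩ := mem_classCu_iff.1 hU
  clear hU
  induction F, hF using Set.Finite.induction_on with
  | empty => simpa using h0
  | @insert C F _ hF ih =>
    have hF' : F ⊆ classC 𝒜 := fun x hx => hFC (Set.mem_insert_of_mem _ hx)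
    rw [Set.sUnion_insert]
    exact h1 C (hFC (Set.mem_insert _ _)) _
      (ih hF')

lemma classC_sdiff_mem {T : Type*} {𝒜 : Set (Set T)}
    (hinter : ∀ A ∈ 𝒜, ∀ B ∈ 𝒜, A ∩ B ∈ 𝒜) {C D : Set T}
    (hC : C ∈ classC 𝒜) (hD : D ∈ classC 𝒜) : C \ D ∈ classCu 𝒜 := by
  obtain ⟨A, hA, F, hF, hFA, rfl⟩ := mem_classC_iff.1 hC
  obtain ⟨A', hA', F', hF', hFA', rfl⟩ := mem_classC_iff.1 hD
  refine mem_classCu_iff.2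
    ⟨insert (A \ ⋃₀ (insert A' F)) ((fun f => (A ∩ f) \ ⋃₀ F) '' F'),
      (hF'.image _).insert _, ?_, ?_⟩
  · rintro _ (rfl | ⟨f, hf, rfl⟩)
    · exact mem_classC_iff.2 ⟨A, hA, _, hF.insert _, Set.insert_subset hA' hFA, rfl⟩
    · exact mem_classC_iff.2 ⟨A ∩ f, hinter A hA f (hFA' hf), F, hF, hFA, rfl⟩
  · have h : ⋃ f ∈ F', (A ∩ f) \ ⋃₀ F = (A ∩ ⋃₀ F') \ ⋃₀ F := by
      rw [Set.sUnion_eq_biUnion (s := F')]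
      simp only [Set.inter_iUnion₂, Set.iUnion_sdiff]
    rw [Set.sUnion_insert, Set.sUnion_image, Set.sUnion_insert, h]
    ext x
    simp only [Set.mem_sdiff, Set.mem_union, Set.mem_inter_iff]
    tauto

lemma isSetRing_classCu {T : Type*} {𝒜 : Set (Set T)}
    (hinter : ∀ A ∈ 𝒜, ∀ B ∈ 𝒜, A ∩ B ∈ 𝒜) : IsSetRing (classCu 𝒜) where
  empty_mem := empty_mem_classCu 𝒜
  union_mem _ _ hU hV := union_mem_classCu hU hV
  sdiff_mem U V hU hV := by
    have key : ∀ D ∈ classC 𝒜, ∀ U ∈ classCu 𝒜, U \ D ∈ classCu 𝒜 := by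
      intro D hD U hU
      refine classCu_induction (p := fun U => U \ D ∈ classCu 𝒜) ?_ ?_ hU
      · simpa using empty_mem_classCu 𝒜
      · intro C hC U ih
        rw [Set.union_sdiff_distrib]
        exact union_mem_classCu (classC_sdiff_mem hinter hC hD) ih
    refine classCu_induction (p := fun V => ∀ U ∈ classCu 𝒜, U \ V ∈ classCu 𝒜) ?_ ?_ hV U hU
    · intro U hU
      simpa using hU
    · intro D hD V ih U hU
      rw [← Set.sdiff_sdiff]
      exact ih _ (key D hD U hU)

lemma generateFrom_classCu {T : Type*} (𝒜 : Set (Set T)) :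
    MeasurableSpace.generateFrom 𝒜 = MeasurableSpace.generateFrom (classCu 𝒜) := by
  refine le_antisymm (MeasurableSpace.generateFrom_mono
    ((subset_classC 𝒜).trans (classC_subset_classCu 𝒜)))
    (MeasurableSpace.generateFrom_le ?_)
  rintro _ ⟨n, Cs, hCs, rfl⟩
  refine MeasurableSet.iUnion fun i => ?_
  obtain ⟨A, m, As, hA, hAs, h⟩ := hCs i
  rw [h]
  exact (MeasurableSpace.measurableSet_generateFrom hA).diff
    (MeasurableSet.iUnion fun j => MeasurableSpace.measurableSet_generateFrom (hAs j))

/-- **Littlewood-type approximation: `𝒞(u)` is dense in the finite-measure sets.**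
If `∅ ∈ 𝒜`, `𝒜` is closed under binary intersections and `T` is a countable union of
elements of `𝒜`, and `μ` is a measure on `σ(𝒜)` finite on `𝒜`, then every
`σ(𝒜)`-measurable set `B` with `μ B < ∞` can be approximated in `d_μ = μ(· △ ·)` by
elements of `𝒞(u)`. -/
theorem stmt_12 {T : Type*} (𝒜 : Set (Set T))
    (hempty : (∅ : Set T) ∈ 𝒜)
    (hinter : ∀ A ∈ 𝒜, ∀ B ∈ 𝒜, A ∩ B ∈ 𝒜)
    (Tk : ℕ → Set T) (hTk : ∀ k, Tk k ∈ 𝒜) (hTkU : (⋃ k, Tk k) = Set.univ)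
    (μ : @Measure T (MeasurableSpace.generateFrom 𝒜))
    (hμ : ∀ A ∈ 𝒜, μ A < ⊤)
    (B : Set T) (hB : MeasurableSet[MeasurableSpace.generateFrom 𝒜] B)
    (hBfin : μ B < ⊤)
    (ε : ℝ≥0∞) (hε : 0 < ε) :
    ∃ U ∈ classCu 𝒜, μ (symmDiff B U) < ε := by
  let _ : MeasurableSpace T := MeasurableSpace.generateFrom 𝒜
  have hR := isSetRing_classCu hinter
  have hTm k : MeasurableSet (Tk k) := MeasurableSpace.measurableSet_generateFrom (hTk k)
  have hTR k : Tk k ∈ classCu 𝒜 := classC_subset_classCu 𝒜 (subset_classC 𝒜 (hTk k))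
  set S : ℕ → Set T := Set.accumulate Tk with hS
  have hSR n : S n ∈ classCu 𝒜 := hR.accumulate_mem hTR n
  have hSm n : MeasurableSet (S n) := by
    rw [hS, Set.accumulate_def]
    exact MeasurableSet.biUnion (Set.to_countable _) fun i _ => hTm i
  have hSfin n : μ (S n) < ⊤ := by
    rw [hS, Set.accumulate_def]
    exact measure_biUnion_lt_top (Set.finite_Iic n) fun i _ => hμ _ (hTk i)
  have hε2 : 0 < ε / 2 := ENNReal.half_pos hε.ne'
  obtain ⟨n, hn⟩ : ∃ n, μ (B \ S n) < ε / 2 := by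
    have hlim : Filter.Tendsto (fun n => μ (B \ S n)) Filter.atTop
        (nhds (μ (⋂ n, B \ S n))) :=
      tendsto_measure_iInter_atTop (fun n => (hB.diff (hSm n)).nullMeasurableSet)
        (fun i j hij => Set.sdiff_subset_sdiff_right (Set.monotone_accumulate hij))
        ⟨0, (measure_mono Set.sdiff_subset |>.trans_lt hBfin).ne⟩
    have h0 : (⋂ n, B \ S n) = ∅ := by
      rw [← Set.sdiff_iUnion, hS, Set.iUnion_accumulate, hTkU, Set.sdiff_univ]
    rw [h0, measure_empty] at hlim
    exact ((tendsto_order.1 hlim).2 _ hε2).exists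
  have : IsFiniteMeasure (μ.restrict (S n)) := ⟨by simpa using hSfin n⟩
  obtain ⟨U, hU, hUB⟩ := exists_measure_symmDiff_lt_of_generateFrom_isSetRing
    (μ := μ.restrict (S n)) hR
    ⟨Set.range Tk, Set.countable_range Tk, by rintro _ ⟨k, rfl⟩; exact hTR k, by
      simp [Set.sUnion_range, hTkU]⟩ (generateFrom_classCu 𝒜) hB hε2
  rw [Measure.restrict_apply' (hSm n)] at hUB
  refine ⟨U ∩ S n, hR.inter_mem hU (hSR n), ?_⟩
  calc μ (symmDiff B (U ∩ S n))
      ≤ μ ((B \ S n) ∪ (symmDiff U B ∩ S n)) := by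
        refine measure_mono fun x hx => ?_
        simp only [Set.mem_symmDiff, Set.mem_union, Set.mem_inter_iff, Set.mem_sdiff] at hx ⊢
        tauto
    _ ≤ μ (B \ S n) + μ (symmDiff U B ∩ S n) := measure_union_le _ _
    _ < ε / 2 + ε / 2 := ENNReal.add_lt_add hn hUB
    _ = ε := ENNReal.add_halves ε
end
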